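/- Let p and q be restriction-free FNM processes. If p ~sp q, then µ.p ~sp µ.q for every action µ ∈ Act. (Structure-preserving bisimilarity is a congruence for action prefixing.) -/

import Mathlib

/-- Actions of FNM: the invisible action τ, input actions `a ∈ L` and
output actions `ā ∈ L̄` (here `α` plays the role of the finite set `L`). -/
inductive Act (α : Type) where
  | tau : Act α
  | inp : α → Act α
  | out : α → Act α
  deriving DecidableEq

/-- (Open) FNM terms: `0`, the variable `x`, action prefixing `mu.t`, strong
prefixing `a̲.s`, choice `s+s`, constants `C`, parallel `t|t` and
restriction `(νa)p`.  The syntactic categories are carved out below. -/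
inductive FNM (α κ : Type) where
  | nil : FNM α κ
  | var : FNM α κ
  | pref : Act α → FNM α κ → FNM α κ
  | spref : α → FNM α κ → FNM α κ
  | sum : FNM α κ → FNM α κ → FNM α κ
  | const : κ → FNM α κ
  | par : FNM α κ → FNM α κ → FNM α κ
  | res : α → FNM α κ → FNM α κ
  deriving DecidableEq

namespace FNM

variable {α κ : Type}

mutual
  /-- Guarded terms: syntactic category `s ::= 0 | mu.t | a̲.s | s+s`
  (with `t` restriction-free). -/
  def Grd : FNM α κ → Prop
    | .nil => True
    | .var => False
    | .pref _ t => RF t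
    | .spref _ s => Grd s
    | .sum s1 s2 => Grd s1 ∧ Grd s2
    | .const _ => False
    | .par _ _ => False
    | .res _ _ => False
  /-- Restriction-free terms: syntactic category `t ::= q | t|t`, where
  `q ::= s | C | x` is the category of sequential terms. -/
  def RF : FNM α κ → Prop
    | .nil => True
    | .var => True
    | .pref _ t => RF t
    | .spref _ s => Grd s
    | .sum s1 s2 => Grd s1 ∧ Grd s2
    | .const _ => True
    | .par t1 t2 => RF t1 ∧ RF t2
    | .res _ _ => False
end

/-- Sequential terms: `q ::= s | C | x`. -/
def Seq (t : FNM α κ) : Prop :=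
  Grd t ∨ (∃ c, t = FNM.const c) ∨ t = FNM.var

/-- General terms: `p ::= t | (νa)p`. -/
def Gen : FNM α κ → Prop
  | .res _ p => Gen p
  | t => RF t

/-- Closed terms: no occurrence of the variable. -/
def VarFree : FNM α κ → Prop
  | .nil => True
  | .var => False
  | .pref _ t => VarFree t
  | .spref _ s => VarFree s
  | .sum s1 s2 => VarFree s1 ∧ VarFree s2
  | .const _ => True
  | .par t1 t2 => VarFree t1 ∧ VarFree t2
  | .res _ p => VarFree p

/-- Substitution `p{r/x}` of the term `r` for every occurrence of the
variable `x` in `p` (constants are dealt with via the environment). -/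
def subst (r : FNM α κ) : FNM α κ → FNM α κ
  | .nil => .nil
  | .var => r
  | .pref mu t => .pref mu (subst r t)
  | .spref a s => .spref a (subst r s)
  | .sum s1 s2 => .sum (subst r s1) (subst r s2)
  | .const c => .const c
  | .par t1 t2 => .par (subst r t1) (subst r t2)
  | .res a p => .res a (subst r p)

/-- `mu` uses the name `a`. -/
def _root_.Act.uses (a : α) : Act α → Prop
  | .tau => False
  | .inp b => b = a
  | .out b => b = a

/-- `a` occurs free in a term (through an environment `env` giving the body
of each process constant). -/
inductive FreeIn (env : κ → FNM α κ) (a : α) : FNM α κ → Prop where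
  | pref_act {mu : Act α} {t : FNM α κ} : mu.uses a → FreeIn env a (.pref mu t)
  | pref_cont {mu : Act α} {t : FNM α κ} : FreeIn env a t → FreeIn env a (.pref mu t)
  | spref_act {s : FNM α κ} : FreeIn env a (.spref a s)
  | spref_cont {b : α} {s : FNM α κ} : FreeIn env a s → FreeIn env a (.spref b s)
  | sum_l {s1 s2 : FNM α κ} : FreeIn env a s1 → FreeIn env a (.sum s1 s2)
  | sum_r {s1 s2 : FNM α κ} : FreeIn env a s2 → FreeIn env a (.sum s1 s2)
  | par_l {t1 t2 : FNM α κ} : FreeIn env a t1 → FreeIn env a (.par t1 t2)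
  | par_r {t1 t2 : FNM α κ} : FreeIn env a t2 → FreeIn env a (.par t1 t2)
  | res {b : α} {p : FNM α κ} : a ≠ b → FreeIn env a p → FreeIn env a (.res b p)
  | const {c : κ} : FreeIn env a (env c) → FreeIn env a (.const c)

/-- `a` occurs bound (by a restriction) in a term. -/
inductive BoundIn (env : κ → FNM α κ) (a : α) : FNM α κ → Prop where
  | res_here {p : FNM α κ} : BoundIn env a (.res a p)
  | res_in {b : α} {p : FNM α κ} : BoundIn env a p → BoundIn env a (.res b p)
  | pref {mu : Act α} {t : FNM α κ} : BoundIn env a t → BoundIn env a (.pref mu t)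
  | spref {b : α} {s : FNM α κ} : BoundIn env a s → BoundIn env a (.spref b s)
  | sum_l {s1 s2 : FNM α κ} : BoundIn env a s1 → BoundIn env a (.sum s1 s2)
  | sum_r {s1 s2 : FNM α κ} : BoundIn env a s2 → BoundIn env a (.sum s1 s2)
  | par_l {t1 t2 : FNM α κ} : BoundIn env a t1 → BoundIn env a (.par t1 t2)
  | par_r {t1 t2 : FNM α κ} : BoundIn env a t2 → BoundIn env a (.par t1 t2)
  | const {c : κ} : BoundIn env a (env c) → BoundIn env a (.const c)

end FNM

/-- A place of the net `N_FNM`: a sequential (extended) term, rendered as a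
pure sequential term together with the record `ρ : α → Bool` of which names
have been replaced by their restricted counterparts (`ρ a = true` represents
the substitution `{a'/a}`). -/
abbrev Place (α κ : Type) := FNM α κ × (α → Bool)

namespace FNM

variable {α κ : Type} [DecidableEq α] [DecidableEq κ] [Fintype α]

/-- The decomposition function `dec`, mapping (extended) terms to markings:
`dec(0) = θ`, `dec(p|q) = dec(p) ⊕ dec(q)`, `dec((νa)p) = dec(p){a'/a}`, and
a sequential term other than `0` is mapped to a single place. -/
def dec (ρ : α → Bool) : FNM α κ → Multiset (Place α κ)
  | .nil => 0
  | .par t1 t2 => dec ρ t1 + dec ρ t2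
  | .res a p => dec (Function.update ρ a true) p
  | t => {(t, ρ)}

end FNM

/-- Extended visible actions: inputs and outputs, possibly restricted
(`inp a true` represents `a'`, `out a false` represents `ā`, etc.). -/
inductive XAct (α : Type) where
  | inp : α → Bool → XAct α
  | out : α → Bool → XAct α

/-- Labels of net transitions: `τ` is the empty sequence, and otherwise a
sequence of extended actions. -/
abbrev Lbl (α : Type) := List (XAct α)

/-- An extended action carries no restricted name. -/
def XAct.unres {α : Type} : XAct α → Prop
  | .inp _ r => r = false
  | .out _ r => r = false

/-- The label contributed by prefix `mu` under the restriction record `ρ`. -/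
def actL {α : Type} (ρ : α → Bool) : Act α → Lbl α
  | .tau => []
  | .inp a => [XAct.inp a (ρ a)]
  | .out a => [XAct.out a (ρ a)]

/-- The synchronization relation `Sync(σ1, σ2, σ)`: `Sync(α, ᾱ, τ)`,
`Sync(aσ, ā, σ)` and `Sync(ā, aσ, σ)` for `σ ≠ ε` (also on restricted
actions). -/
inductive Sync {α : Type} : Lbl α → Lbl α → Lbl α → Prop where
  | inout (a : α) (r : Bool) : Sync [XAct.inp a r] [XAct.out a r] []
  | outin (a : α) (r : Bool) : Sync [XAct.out a r] [XAct.inp a r] []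
  | seqL (a : α) (r : Bool) (σ : Lbl α) :
      σ ≠ [] → Sync (XAct.inp a r :: σ) [XAct.out a r] σ
  | seqR (a : α) (r : Bool) (σ : Lbl α) :
      σ ≠ [] → Sync [XAct.out a r] (XAct.inp a r :: σ) σ

namespace FNM

variable {α κ : Type} [DecidableEq α] [DecidableEq κ] [Fintype α]

/-- A marking is admissible if for no name `a` both `a` and its restricted
counterpart `a'` occur free in it. -/
def Adm (env : κ → FNM α κ) (m : Multiset (Place α κ)) : Prop :=
  ∀ a : α, ¬ ((∃ p ∈ m, FreeIn env a p.1 ∧ p.2 a = false) ∧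
              (∃ p ∈ m, FreeIn env a p.1 ∧ p.2 a = true))

/-- The net transitions of `N_FNM`, generated by the rules (pref), (sum₁),
(sum₂), (cons), (s-pref) and (s-com). -/
inductive Tr (env : κ → FNM α κ) :
    Multiset (Place α κ) → Lbl α → Multiset (Place α κ) → Prop where
  | pref (ρ : α → Bool) (mu : Act α) (t : FNM α κ) :
      Tr env {(FNM.pref mu t, ρ)} (actL ρ mu) (dec ρ t)
  | sum1 (ρ : α → Bool) (s1 s2 : FNM α κ) (σ : Lbl α) (m : Multiset (Place α κ)) :
      Tr env (dec ρ s1) σ m → Tr env {(FNM.sum s1 s2, ρ)} σ m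
  | sum2 (ρ : α → Bool) (s1 s2 : FNM α κ) (σ : Lbl α) (m : Multiset (Place α κ)) :
      Tr env (dec ρ s2) σ m → Tr env {(FNM.sum s1 s2, ρ)} σ m
  | cons (ρ : α → Bool) (c : κ) (σ : Lbl α) (m : Multiset (Place α κ)) :
      Tr env (dec ρ (env c)) σ m → Tr env {(FNM.const c, ρ)} σ m
  | spref (ρ : α → Bool) (a : α) (s : FNM α κ) (σ : Lbl α) (m : Multiset (Place α κ)) :
      Tr env (dec ρ s) σ m →
      Tr env {(FNM.spref a s, ρ)} (XAct.inp a (ρ a) :: σ) m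
  | scom (m1 m2 m1' m2' : Multiset (Place α κ)) (σ1 σ2 σ : Lbl α) :
      Tr env m1 σ1 m1' → Tr env m2 σ2 m2' →
      Adm env (m1 + m2) → Sync σ1 σ2 σ →
      Tr env (m1 + m2) σ (m1' + m2')

/-- Tritions of the net `N_FNM`: only those whose label contains no
restricted action are kept. -/
def NetTr (env : κ → FNM α κ) (m : Multiset (Place α κ)) (σ : Lbl α)
    (m' : Multiset (Place α κ)) : Prop :=
  Tr env m σ m' ∧ ∀ x ∈ σ, x.unres

/-- First projection of a linking. -/
def pi1 (l : Multiset (Place α κ × Place α κ)) : Multiset (Place α κ) :=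
  l.map Prod.fst

/-- Second projection of a linking. -/
def pi2 (l : Multiset (Place α κ × Place α κ)) : Multiset (Place α κ) :=
  l.map Prod.snd

/-- Structure-preserving bisimulation on the net `N_FNM`. -/
def IsSPB (env : κ → FNM α κ) (R : Set (Multiset (Place α κ × Place α κ))) : Prop :=
  ∀ l ∈ R, ∀ c ≤ l,
    (∀ σ m1, NetTr env (pi1 c) σ m1 →
      ∃ m2 cb, NetTr env (pi2 c) σ m2 ∧
        pi1 cb = m1 ∧ pi2 cb = m2 ∧ l - c + cb ∈ R) ∧
    (∀ σ m2, NetTr env (pi2 c) σ m2 →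
      ∃ m1 cb, NetTr env (pi1 c) σ m1 ∧
        pi1 cb = m1 ∧ pi2 cb = m2 ∧ l - c + cb ∈ R)

/-- `p ~sp q`: some structure-preserving bisimulation contains a linking
projecting on `dec(p)` and `dec(q)`. -/
def SPEq (env : κ → FNM α κ) (p q : FNM α κ) : Prop :=
  ∃ R, IsSPB env R ∧ ∃ l ∈ R,
    pi1 l = dec (fun _ => false) p ∧ pi2 l = dec (fun _ => false) q

end FNM

/-!
The only transition out of the place of `mu.p` consumes that place alone, is labelled by `mu` and
produces `dec p`. Hence, if an sp-bisimulation `R` contains a linking `l` of `dec p` with `dec q`,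
adding to `R` the single link between `mu.p` and `mu.q` gives an sp-bisimulation: every move of
the new linking is matched by the `mu`-move on the other side and leads to `l`.
-/

namespace FNM

section Transitions

variable {α κ : Type} [DecidableEq α] {env : κ → FNM α κ} {ρ : α → Bool} {mu : Act α}
  {p : FNM α κ} {m m' : Multiset (Place α κ)} {σ : Lbl α}

theorem Tr.ne_zero (h : Tr env m σ m') : m ≠ 0 := by
  induction h with
  | scom m₁ m₂ _ _ _ _ _ _ _ _ _ ih₁ _ => exact fun h₀ => ih₁ (add_eq_zero.mp h₀).1
  | _ => exact Multiset.singleton_ne_zero _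

theorem tr_pref_iff : Tr env {(pref mu p, ρ)} σ m ↔ σ = actL ρ mu ∧ m = dec ρ p := by
  refine ⟨fun h => ?_, fun ⟨hσ, hm⟩ => hσ ▸ hm ▸ Tr.pref ρ mu p⟩
  generalize hpre : ({(pref mu p, ρ)} : Multiset (Place α κ)) = pre at h
  cases h with
  | pref ρ' mu' t =>
    obtain ⟨⟨rfl, rfl⟩, rfl⟩ : (mu = mu' ∧ p = t) ∧ ρ = ρ' := by simpa using hpre
    exact ⟨rfl, rfl⟩
  | scom m₁ m₂ _ _ _ _ _ h₁ h₂ =>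
    have hcard : 1 = m₁.card + m₂.card := by simpa using congrArg Multiset.card hpre
    have hpos₁ := Multiset.card_pos.mpr h₁.ne_zero
    have hpos₂ := Multiset.card_pos.mpr h₂.ne_zero
    omega
  | _ => simp at hpre

theorem netTr_pref_iff :
    NetTr env {(pref mu p, ρ)} σ m ↔ (∀ x ∈ σ, x.unres) ∧ σ = actL ρ mu ∧ m = dec ρ p :=
  (and_congr_left' tr_pref_iff).trans and_comm

theorem not_netTr_zero : ¬ NetTr env 0 σ m :=
  fun h => h.1.ne_zero rfl

end Transitions

section Linkings

variable {α κ : Type}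

@[simp]
theorem pi1_zero : pi1 (0 : Multiset (Place α κ × Place α κ)) = 0 := rfl

@[simp]
theorem pi2_zero : pi2 (0 : Multiset (Place α κ × Place α κ)) = 0 := rfl

@[simp]
theorem pi1_singleton (x : Place α κ × Place α κ) : pi1 {x} = {x.1} := rfl

@[simp]
theorem pi2_singleton (x : Place α κ × Place α κ) : pi2 {x} = {x.2} := rfl

end Linkings

section Bisimulation

variable {α κ : Type} [DecidableEq α] [DecidableEq κ] [Fintype α] {env : κ → FNM α κ}
  {R R' : Set (Multiset (Place α κ × Place α κ))} {l : Multiset (Place α κ × Place α κ)}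

/-- The transfer property of a single linking `l`: every move from a part of one side of `l` is
matched on the other side, with the updated linking in `R`. The target `R` need not contain `l`;
`IsSPB env R` says that every `l ∈ R` has the transfer property into `R` itself. -/
def Transfers (env : κ → FNM α κ) (R : Set (Multiset (Place α κ × Place α κ)))
    (l : Multiset (Place α κ × Place α κ)) : Prop :=
  ∀ c ≤ l,
    (∀ σ m₁, NetTr env (pi1 c) σ m₁ →
      ∃ m₂ cb, NetTr env (pi2 c) σ m₂ ∧ pi1 cb = m₁ ∧ pi2 cb = m₂ ∧ l - c + cb ∈ R) ∧
    (∀ σ m₂, NetTr env (pi2 c) σ m₂ →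
      ∃ m₁ cb, NetTr env (pi1 c) σ m₁ ∧ pi1 cb = m₁ ∧ pi2 cb = m₂ ∧ l - c + cb ∈ R)

theorem Transfers.mono (hl : Transfers env R l) (hRR' : R ⊆ R') : Transfers env R' l := by
  intro c hc
  refine ⟨fun σ m₁ hm₁ => ?_, fun σ m₂ hm₂ => ?_⟩
  · obtain ⟨m₂, cb, hm₂, hcb₁, hcb₂, hR⟩ := (hl c hc).1 σ m₁ hm₁
    exact ⟨m₂, cb, hm₂, hcb₁, hcb₂, hRR' hR⟩
  · obtain ⟨m₁, cb, hm₁, hcb₁, hcb₂, hR⟩ := (hl c hc).2 σ m₂ hm₂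
    exact ⟨m₁, cb, hm₁, hcb₁, hcb₂, hRR' hR⟩

theorem IsSPB.insert (hR : IsSPB env R) (hl : Transfers env R l) : IsSPB env (insert l R) := by
  rintro l' (rfl | hl')
  · exact hl.mono (Set.subset_insert _ R)
  · exact Transfers.mono (hR l' hl') (Set.subset_insert l R)

theorem transfers_singleton_pref {ρ ρ' : α → Bool} {mu mu' : Act α} {p q : FNM α κ}
    (hlabel : actL ρ mu = actL ρ' mu') (hl : l ∈ R) (hp : pi1 l = dec ρ p)
    (hq : pi2 l = dec ρ' q) : Transfers env R {((pref mu p, ρ), (pref mu' q, ρ'))} := by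
  intro c hc
  rcases Multiset.le_singleton.mp hc with rfl | rfl
  · simp only [pi1_zero, pi2_zero, not_netTr_zero, false_implies, implies_true, and_self]
  · simp only [pi1_singleton, pi2_singleton, tsub_self, zero_add, netTr_pref_iff]
    constructor
    · rintro σ _ ⟨hσ, rfl, rfl⟩
      exact ⟨dec ρ' q, l, ⟨hσ, hlabel, rfl⟩, hp, hq, hl⟩
    · rintro σ _ ⟨hσ, rfl, rfl⟩
      exact ⟨dec ρ p, l, ⟨hσ, hlabel.symm, rfl⟩, hp, hq, hl⟩

end Bisimulation

end FNM

open FNM in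
theorem speq_congr_pref_general {α κ : Type} [DecidableEq α] [DecidableEq κ] [Fintype α]
    (env : κ → FNM α κ) (p q : FNM α κ) (h : SPEq env p q) :
    ∀ mu : Act α, SPEq env (FNM.pref mu p) (FNM.pref mu q) := by
  intro mu
  obtain ⟨R, hR, l, hl, hp, hq⟩ := h
  exact ⟨_, hR.insert (transfers_singleton_pref rfl hl hp hq), _, Set.mem_insert _ R, rfl, rfl⟩

open FNM in
/-- structure-preserving bisimilarity is a congruence for action
prefixing: for restriction-free FNM processes `p, q` with `p ~sp q`,
`mu.p ~sp mu.q` for every action `mu ∈ Act`. -/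
theorem speq_congr_pref {α κ : Type} [DecidableEq α] [DecidableEq κ]
    [Fintype α] [Finite κ]
    (env : κ → FNM α κ) (henv : ∀ c, Grd (env c) ∧ VarFree (env c))
    (p q : FNM α κ) (hp : RF p) (hq : RF q)
    (hpv : VarFree p) (hqv : VarFree q)
    (h : SPEq env p q) :
    ∀ mu : Act α, SPEq env (FNM.pref mu p) (FNM.pref mu q) :=
  speq_congr_pref_general env p q h
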